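/- Let β > 0 and q_n = e^{−β} β^n / n! for n ∈ ℕ. Let (Ω, μ) be a probability space carrying {0,1}-valued random variables (J_n)_{n∈ℕ} and random variables (L_n)_{n∈ℕ} with values in [0,1], and let (Ω', ρ) be a probability space carrying {0,1}-valued random variables (I_n)_{n∈ℕ} that are pointwise nonincreasing in n, such that E_ρ[I_n] = E_μ[J_n L_n] =: p_n for every n. Then E_μ[(Σ_n q_n J_n L_n)²] ≤ E_ρ[(Σ_n q_n I_n)²] ≤ Σ_n q_n p_n. Consequently, since all three estimators Ỹ = Σ_n q_n J_n L_n (under μ), Ŷ = Σ_n q_n I_n (under ρ), and the Bernoulli estimator with success probability p* = Σ_n q_n p_n have the same mean p*, their variances satisfy Var_μ(Ỹ) ≤ Var_ρ(Ŷ) ≤ p*(1 − p*). -/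

import Mathlib

open MeasureTheory ProbabilityTheory

/-- The Poisson(β) probability mass function `q_n = e^{-β} β^n / n!`. -/
noncomputable def poissonPMF (β : ℝ) (n : ℕ) : ℝ := Real.exp (-β) * β ^ n / n.factorial

lemma poissonPMF_nonneg {β : ℝ} (hβ : 0 ≤ β) (n : ℕ) : 0 ≤ poissonPMF β n := by
  unfold _root_.poissonPMF
  positivity

lemma hasSum_poissonPMF {β : ℝ} (hβ : 0 ≤ β) : HasSum (poissonPMF β) 1 :=
  hasSum_one_poissonMeasure ⟨β, hβ⟩

section WeightedSum

variable {ι Ω : Type*} {q : ι → ℝ}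

lemma summable_mul_of_mem_Icc (hq0 : ∀ n, 0 ≤ q n) (hq : Summable q) {x : ι → ℝ}
    (hx : ∀ n, x n ∈ Set.Icc (0 : ℝ) 1) : Summable fun n => q n * x n :=
  .of_nonneg_of_le (fun n => mul_nonneg (hq0 n) (hx n).1)
    (fun n => mul_le_of_le_one_right (hq0 n) (hx n).2) hq

lemma tsum_mul_mem_Icc (hq0 : ∀ n, 0 ≤ q n) (hq : HasSum q 1) {x : ι → ℝ}
    (hx : ∀ n, x n ∈ Set.Icc (0 : ℝ) 1) : ∑' n, q n * x n ∈ Set.Icc (0 : ℝ) 1 := by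
  refine ⟨tsum_nonneg fun n => mul_nonneg (hq0 n) (hx n).1, ?_⟩
  rw [← hq.tsum_eq]
  exact (summable_mul_of_mem_Icc hq0 hq.summable hx).tsum_le_tsum
    (fun n => mul_le_of_le_one_right (hq0 n) (hx n).2) hq.summable

variable [MeasurableSpace Ω] {μ : Measure Ω} [IsProbabilityMeasure μ]

lemma integrable_of_mem_Icc {X : Ω → ℝ} (hX : Measurable X)
    (hX01 : ∀ ω, X ω ∈ Set.Icc (0 : ℝ) 1) : Integrable X μ :=
  .of_mem_Icc 0 1 hX.aemeasurable (.of_forall hX01)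

lemma integral_mem_Icc {X : Ω → ℝ} (hX : Measurable X)
    (hX01 : ∀ ω, X ω ∈ Set.Icc (0 : ℝ) 1) : ∫ ω, X ω ∂μ ∈ Set.Icc (0 : ℝ) 1 := by
  refine ⟨integral_nonneg fun ω => (hX01 ω).1, ?_⟩
  simpa using integral_mono (integrable_of_mem_Icc (μ := μ) hX hX01) (integrable_const (1 : ℝ))
    (fun ω => (hX01 ω).2)

variable [Countable ι] {X : ι → Ω → ℝ}

lemma integral_tsum_mul (hq0 : ∀ n, 0 ≤ q n) (hq : Summable q) (hX : ∀ n, Measurable (X n))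
    (hX01 : ∀ n ω, X n ω ∈ Set.Icc (0 : ℝ) 1) :
    ∫ ω, ∑' n, q n * X n ω ∂μ = ∑' n, q n * ∫ ω, X n ω ∂μ := by
  rw [← integral_tsum_of_summable_integral_norm]
  · simp_rw [integral_const_mul]
  · exact fun n => (integrable_of_mem_Icc (hX n) (hX01 n)).const_mul _
  · have h (n : ι) (ω : Ω) : ‖q n * X n ω‖ = q n * X n ω :=
      Real.norm_of_nonneg (mul_nonneg (hq0 n) (hX01 n ω).1)
    simp_rw [h, integral_const_mul]
    exact summable_mul_of_mem_Icc hq0 hq fun n => integral_mem_Icc (hX n) (hX01 n)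

/-- The second moment of a weighted sum, expanded as a double sum of mixed moments. -/
lemma integral_tsum_mul_sq (hq0 : ∀ n, 0 ≤ q n) (hq : HasSum q 1) (hX : ∀ n, Measurable (X n))
    (hX01 : ∀ n ω, X n ω ∈ Set.Icc (0 : ℝ) 1) :
    ∫ ω, (∑' n, q n * X n ω) ^ 2 ∂μ =
      ∑' m, q m * ∑' n, q n * ∫ ω, X m ω * X n ω ∂μ := by
  have hS : Measurable fun ω => ∑' n, q n * X n ω := .tsum fun n => (hX n).const_mul _
  have hS01 (ω : Ω) := tsum_mul_mem_Icc hq0 hq fun n => hX01 n ω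
  calc ∫ ω, (∑' n, q n * X n ω) ^ 2 ∂μ
      = ∫ ω, ∑' m, q m * (X m ω * ∑' n, q n * X n ω) ∂μ := by
        simp_rw [sq, ← mul_assoc, tsum_mul_right]
    _ = ∑' m, q m * ∫ ω, X m ω * ∑' n, q n * X n ω ∂μ :=
        integral_tsum_mul hq0 hq.summable (fun m => (hX m).mul hS)
          fun m ω => unitInterval.mul_mem (hX01 m ω) (hS01 ω)
    _ = ∑' m, q m * ∫ ω, ∑' n, q n * (X m ω * X n ω) ∂μ := by
        simp_rw [← tsum_mul_left, mul_left_comm]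
    _ = _ := by
        congr! 3 with m
        exact integral_tsum_mul hq0 hq.summable (fun n => (hX m).mul (hX n))
          fun n ω => unitInterval.mul_mem (hX01 m ω) (hX01 n ω)

lemma variance_tsum_mul (hq0 : ∀ n, 0 ≤ q n) (hq : HasSum q 1) (hX : ∀ n, Measurable (X n))
    (hX01 : ∀ n ω, X n ω ∈ Set.Icc (0 : ℝ) 1) :
    variance (fun ω => ∑' n, q n * X n ω) μ =
      ∫ ω, (∑' n, q n * X n ω) ^ 2 ∂μ - (∑' n, q n * ∫ ω, X n ω ∂μ) ^ 2 := by
  have hS : Measurable fun ω => ∑' n, q n * X n ω := .tsum fun n => (hX n).const_mul _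
  rw [variance_eq_sub (memLp_of_bounded
    (.of_forall fun ω => tsum_mul_mem_Icc hq0 hq fun n => hX01 n ω) hS.aestronglyMeasurable 2),
    integral_tsum_mul hq0 hq.summable hX hX01]
  rfl

lemma integral_tsum_mul_sq_le (hq0 : ∀ n, 0 ≤ q n) (hq : HasSum q 1)
    (hX : ∀ n, Measurable (X n)) (hX01 : ∀ n ω, X n ω ∈ Set.Icc (0 : ℝ) 1) :
    ∫ ω, (∑' n, q n * X n ω) ^ 2 ∂μ ≤ ∑' n, q n * ∫ ω, X n ω ∂μ := by
  have hS : Measurable fun ω => ∑' n, q n * X n ω := .tsum fun n => (hX n).const_mul _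
  have hS01 (ω : Ω) := tsum_mul_mem_Icc hq0 hq fun n => hX01 n ω
  rw [← integral_tsum_mul hq0 hq.summable hX hX01]
  refine integral_mono_of_nonneg (.of_forall fun ω => sq_nonneg _)
    (integrable_of_mem_Icc hS hS01) (.of_forall fun ω => ?_)
  exact pow_le_of_le_one (hS01 ω).1 (hS01 ω).2 two_ne_zero

/-- Ordering the mixed moments orders the second moments of the weighted sums. -/
lemma integral_tsum_mul_sq_mono {Ω' : Type*} [MeasurableSpace Ω'] {ρ : Measure Ω'}
    [IsProbabilityMeasure ρ] {Y : ι → Ω' → ℝ} (hq0 : ∀ n, 0 ≤ q n) (hq : HasSum q 1)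
    (hX : ∀ n, Measurable (X n)) (hX01 : ∀ n ω, X n ω ∈ Set.Icc (0 : ℝ) 1)
    (hY : ∀ n, Measurable (Y n)) (hY01 : ∀ n ω, Y n ω ∈ Set.Icc (0 : ℝ) 1)
    (h : ∀ m n, ∫ ω, X m ω * X n ω ∂μ ≤ ∫ ω, Y m ω * Y n ω ∂ρ) :
    ∫ ω, (∑' n, q n * X n ω) ^ 2 ∂μ ≤ ∫ ω, (∑' n, q n * Y n ω) ^ 2 ∂ρ := by
  rw [integral_tsum_mul_sq hq0 hq hX hX01, integral_tsum_mul_sq hq0 hq hY hY01]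
  have hXX (m n : ι) : ∫ ω, X m ω * X n ω ∂μ ∈ Set.Icc (0 : ℝ) 1 :=
    integral_mem_Icc ((hX m).mul (hX n)) fun ω => unitInterval.mul_mem (hX01 m ω) (hX01 n ω)
  have hYY (m n : ι) : ∫ ω, Y m ω * Y n ω ∂ρ ∈ Set.Icc (0 : ℝ) 1 :=
    integral_mem_Icc ((hY m).mul (hY n)) fun ω => unitInterval.mul_mem (hY01 m ω) (hY01 n ω)
  refine Summable.tsum_le_tsum (fun m => mul_le_mul_of_nonneg_left ?_ (hq0 m))
    (summable_mul_of_mem_Icc hq0 hq.summable fun m => tsum_mul_mem_Icc hq0 hq (hXX m))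
    (summable_mul_of_mem_Icc hq0 hq.summable fun m => tsum_mul_mem_Icc hq0 hq (hYY m))
  exact Summable.tsum_le_tsum (fun n => mul_le_mul_of_nonneg_left (h m n) (hq0 n))
    (summable_mul_of_mem_Icc hq0 hq.summable (hXX m))
    (summable_mul_of_mem_Icc hq0 hq.summable (hYY m))

end WeightedSum

/-- A pointwise nonincreasing sequence of indicators has the largest mixed moments among
`[0,1]`-valued sequences with the same means. -/
lemma integral_mul_le_of_antitone_indicator {Ω Ω' : Type*} [MeasurableSpace Ω]
    [MeasurableSpace Ω'] {μ : Measure Ω} {ρ : Measure Ω'} [IsProbabilityMeasure μ]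
    {X : ℕ → Ω → ℝ} {Y : ℕ → Ω' → ℝ}
    (hX : ∀ n, Measurable (X n)) (hX01 : ∀ n ω, X n ω ∈ Set.Icc (0 : ℝ) 1)
    (hY01 : ∀ n ω, Y n ω = 0 ∨ Y n ω = 1) (hY : ∀ ω, Antitone fun n => Y n ω)
    (h : ∀ n, ∫ ω, X n ω ∂μ = ∫ ω, Y n ω ∂ρ) (m n : ℕ) :
    ∫ ω, X m ω * X n ω ∂μ ≤ ∫ ω, Y m ω * Y n ω ∂ρ := by
  wlog hmn : m ≤ n generalizing m n
  · simpa only [mul_comm] using this n m (le_of_not_ge hmn)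
  have hYY (ω : Ω') : Y m ω * Y n ω = Y n ω := by
    have hle : Y n ω ≤ Y m ω := hY ω hmn
    rcases hY01 m ω with hm | hm <;> rcases hY01 n ω with hn | hn <;> rw [hm, hn] at hle ⊢ <;>
      linarith
  simp_rw [hYY, ← h]
  exact integral_mono_of_nonneg (.of_forall fun ω => mul_nonneg (hX01 m ω).1 (hX01 n ω).1)
    (integrable_of_mem_Icc (hX n) (hX01 n))
    (.of_forall fun ω => mul_le_of_le_one_left (hX01 n ω).1 (hX01 m ω).2)

/-- Proposition 1: variance ordering of the importance sampling estimator
`Ỹ = Σ_n q_n J_n L_n` (under μ), the conditional Monte Carlo estimator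
`Ŷ = Σ_n q_n I_n` (under ρ), and the naive Bernoulli estimator with mean
`p* = Σ_n q_n p_n`. -/
theorem variance_IS_le_variance_CMC_le_variance_NMC
    {Ω Ω' : Type*} [MeasurableSpace Ω] [MeasurableSpace Ω']
    (μ : Measure Ω) (ρ : Measure Ω') [IsProbabilityMeasure μ] [IsProbabilityMeasure ρ]
    (β : ℝ) (hβ : 0 < β)
    (J L : ℕ → Ω → ℝ) (I : ℕ → Ω' → ℝ)
    (hJmeas : ∀ n, Measurable (J n)) (hLmeas : ∀ n, Measurable (L n))
    (hImeas : ∀ n, Measurable (I n))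
    (hJ01 : ∀ n ω, J n ω = 0 ∨ J n ω = 1)
    (hL01 : ∀ n ω, L n ω ∈ Set.Icc (0 : ℝ) 1)
    (hI01 : ∀ n ω, I n ω = 0 ∨ I n ω = 1)
    (hImono : ∀ n ω, I (n + 1) ω ≤ I n ω)
    (p : ℕ → ℝ)
    (hp : ∀ n, p n = ∫ ω, I n ω ∂ρ)
    (hcm : ∀ n, ∫ ω, J n ω * L n ω ∂μ = p n) :
    (∫ ω, (∑' n : ℕ, poissonPMF β n * (J n ω * L n ω)) ^ 2 ∂μ ≤
        ∫ ω, (∑' n : ℕ, poissonPMF β n * I n ω) ^ 2 ∂ρ) ∧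
    (∫ ω, (∑' n : ℕ, poissonPMF β n * I n ω) ^ 2 ∂ρ ≤ ∑' n : ℕ, poissonPMF β n * p n) ∧
    variance (fun ω => ∑' n : ℕ, poissonPMF β n * (J n ω * L n ω)) μ ≤
        variance (fun ω => ∑' n : ℕ, poissonPMF β n * I n ω) ρ ∧
    variance (fun ω => ∑' n : ℕ, poissonPMF β n * I n ω) ρ ≤
        (∑' n : ℕ, poissonPMF β n * p n) * (1 - ∑' n : ℕ, poissonPMF β n * p n) := by
  have hq0 := poissonPMF_nonneg hβ.le
  have hq := hasSum_poissonPMF hβ.le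
  have hI01' (n : ℕ) (ω : Ω') : I n ω ∈ Set.Icc (0 : ℝ) 1 := by
    rcases hI01 n ω with h | h <;> simp [h]
  have hX (n : ℕ) : Measurable fun ω => J n ω * L n ω := (hJmeas n).mul (hLmeas n)
  have hX01 (n : ℕ) (ω : Ω) : J n ω * L n ω ∈ Set.Icc (0 : ℝ) 1 :=
    unitInterval.mul_mem (by rcases hJ01 n ω with h | h <;> simp [h]) (hL01 n ω)
  have hIS := integral_tsum_mul_sq_mono hq0 hq hX hX01 hImeas hI01'
    (integral_mul_le_of_antitone_indicator (ρ := ρ) (μ := μ) hX hX01 hI01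
      (fun ω => antitone_nat_of_succ_le fun n => hImono n ω) fun n => (hcm n).trans (hp n))
  have hCMC := integral_tsum_mul_sq_le (μ := ρ) hq0 hq hImeas hI01'
  simp_rw [← hp] at hCMC
  refine ⟨hIS, hCMC, ?_, ?_⟩
  · rw [variance_tsum_mul hq0 hq hX hX01, variance_tsum_mul hq0 hq hImeas hI01']
    simp_rw [hcm, ← hp]
    linarith
  · rw [variance_tsum_mul hq0 hq hImeas hI01']
    simp_rw [← hp]
    linarith
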